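/- Let X be a Peano continuum without cut points which admits no essential map to the circle, and let 𝓐 be a collection of connected closed subsets of X, each containing at least two points, such that 𝓐 is null and fine. Suppose A, B ∈ 𝓐 satisfy A ∩ B = {c} for a single point c, and let b ∈ B \ {c}. Then there is a crossing sequence A, A_1, …, A_n, B in 𝓐 with A_i ∩ {b, c} = ∅ for all 1 ≤ i ≤ n. -/

import Mathlib

/-!
The crossings produced here are all intersections. They come from Janiszewski's principle: when
every map to the circle lifts to `ℝ`, two disjoint closed sets, neither of which separates `x` from
`y`, cannot together contain the frontier of a set containing `x` but not `y`.

Its first consequence is that `N \ {c}` is connected for a connected open neighbourhood `N` of `c`,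
so a continuum `P ⊆ N \ {c}` joins `A` to `B`. Its second consequence is that, when finitely many
closed sets cover the frontier of a set containing `c` but not `a`, they contain a chain of
successively intersecting sets leading from any connected set joining `c` to `a` to any other. This
is applied to `A` and `B ∪ P`, where `a ∈ A ∩ P`, and to a neighbourhood `U` of `c` with
`closure U ⊆ N \ P` whose frontier is covered by finitely many members of `𝓐` not containing `c`;
such a `U` exists by fineness and compactness. The chain ends at `B` because it runs in the frontier
of `U`, which misses `P`. Since all its terms meet `N`, nullness keeps them away from `b` once `N`
is small.
-/

open Set Filter Topology Pointwise

/-- The set `E` separates the points `x` and `y`: both lie outside `E` and in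
different connected components of the complement of `E`. -/
def SepPts {X : Type*} [TopologicalSpace X] (E : Set X) (x y : X) : Prop :=
  x ∉ E ∧ y ∉ E ∧ connectedComponentIn Eᶜ x ≠ connectedComponentIn Eᶜ y

/-- The set `E` separates the set `Y ⊆ X \ E`: two points of `Y` lie in different
connected components of the complement of `E`. -/
def SepSet {X : Type*} [TopologicalSpace X] (E Y : Set X) : Prop :=
  Y ⊆ Eᶜ ∧ ∃ x ∈ Y, ∃ y ∈ Y, connectedComponentIn Eᶜ x ≠ connectedComponentIn Eᶜ y

/-- Two (closed) sets `A` and `B` cross: they intersect, or each separates the other. -/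
def Crosses {X : Type*} [TopologicalSpace X] (A B : Set X) : Prop :=
  (A ∩ B).Nonempty ∨ (SepSet A B ∧ SepSet B A)

/-- There is a (finite) crossing sequence in `𝓐` from `A` to `B`. -/
def CrossSeqFromTo {X : Type*} [TopologicalSpace X] (𝓐 : Set (Set X)) (A B : Set X) : Prop :=
  ∃ (n : ℕ) (c : ℕ → Set X), c 0 = A ∧ c n = B ∧ (∀ i ≤ n, c i ∈ 𝓐) ∧
    ∀ i < n, Crosses (c i) (c (i + 1))

/-- A collection `𝓐` is cross-connected: any two of its elements are joined by a
crossing sequence in `𝓐`. -/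
def CrossConnected {X : Type*} [TopologicalSpace X] (𝓐 : Set (Set X)) : Prop :=
  ∀ A ∈ 𝓐, ∀ B ∈ 𝓐, CrossSeqFromTo 𝓐 A B

/-- There is a crossing sequence `A, A_1, …, A_n, B` in `𝓐` (with `n ≥ 1`) whose
intermediate terms `A_1, …, A_n` are disjoint from `D`. -/
def CrossSeqAvoiding {X : Type*} [TopologicalSpace X] (𝓐 : Set (Set X)) (A B D : Set X) :
    Prop :=
  ∃ n : ℕ, 1 ≤ n ∧ ∃ c : ℕ → Set X, c 0 = A ∧ c (n + 1) = B ∧ (∀ i ≤ n + 1, c i ∈ 𝓐) ∧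
    (∀ i ≤ n, Crosses (c i) (c (i + 1))) ∧ ∀ i, 1 ≤ i → i ≤ n → c i ∩ D = ∅

/-- A collection of subsets of a metric space is null if for every `ε > 0` only finitely
many of its members have diameter greater than `ε`. -/
def NullFam {X : Type*} [PseudoMetricSpace X] (𝓐 : Set (Set X)) : Prop :=
  ∀ ε : ℝ, 0 < ε → {A ∈ 𝓐 | ε < Metric.diam A}.Finite

/-- A collection `𝓐` is fine if any two distinct points are separated by the union of
some finite subcollection of `𝓐`. -/
def FineFam {X : Type*} [PseudoMetricSpace X] (𝓐 : Set (Set X)) : Prop :=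
  ∀ x y : X, x ≠ y → ∃ 𝓑 ⊆ 𝓐, 𝓑.Finite ∧ SepPts (⋃₀ 𝓑) x y

/-- A sequence of maps `T i : X → X` acts as a convergence sequence on the subset `A`,
with repeller `n ∈ A` and attractor `p ∈ A`: for every compact `C ⊆ A \ {n}` and every
open neighborhood `U` of `p`, eventually `T i '' C ⊆ U`. -/
def ConvSeqOn {X : Type*} [TopologicalSpace X] (A : Set X) (T : ℕ → X → X) (n p : X) :
    Prop :=
  n ∈ A ∧ p ∈ A ∧ ∀ C : Set X, C ⊆ A → IsCompact C → n ∉ C →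
    ∀ U : Set X, IsOpen U → p ∈ U → ∀ᶠ i in atTop, T i '' C ⊆ U

/-- The stabilizer of a subset `A ⊆ X` in `G`. -/
def stab (G : Type*) {X : Type*} [Group G] [MulAction G X] (A : Set X) : Set G :=
  {g : G | g • A = A}

/-- The subset `S` of the group `G` acts as a convergence group on `A ⊆ X`: every
sequence of distinct elements of `S` has a subsequence acting as a convergence
sequence on `A`. -/
def ConvGroupOn {G X : Type*} [Group G] [MulAction G X] [TopologicalSpace X]
    (S : Set G) (A : Set X) : Prop :=
  ∀ g : ℕ → G, (∀ i, g i ∈ S) → Function.Injective g →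
    ∃ k : ℕ → ℕ, StrictMono k ∧ ∃ n p : X,
      ConvSeqOn A (fun i => (g (k i) • · : X → X)) n p

/-- `(G, 𝓐)` is a local convergence pairing on `X`. -/
structure IsLocalConvPairing (G : Type*) {X : Type*} [Group G] [MulAction G X]
    [MetricSpace X] (𝓐 : Set (Set X)) : Prop where
  closed : ∀ A ∈ 𝓐, IsClosed A
  invariant : ∀ g : G, ∀ A ∈ 𝓐, g • A ∈ 𝓐
  big : ∀ A ∈ 𝓐, 2 < A.encard
  null : NullFam 𝓐
  fine : FineFam 𝓐
  stabConv : ∀ A ∈ 𝓐, ConvGroupOn (stab G A) A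
  connect : ∀ A ∈ 𝓐, ∀ B ∈ 𝓐, (A ∩ B).encard ≤ 2 →
    (∀ c : X, A ∩ B = {c} → ∀ b ∈ B, b ≠ c → CrossSeqAvoiding 𝓐 A B {b, c}) ∧
    ((¬ ∃ c : X, A ∩ B = {c}) → CrossSeqAvoiding 𝓐 A B (A ∩ B))

/-! ### Lifting circle-valued maps -/

theorem exists_lift_of_nullhomotopic {E X Y : Type*} [TopologicalSpace E] [TopologicalSpace X]
    [TopologicalSpace Y] {p : E → Y} (hp : IsCoveringMap p) (hsurj : Function.Surjective p)
    {f : C(X, Y)} (hf : f.Nullhomotopic) : ∃ φ : C(X, E), ∀ x, p (φ x) = f x := by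
  obtain ⟨y, hy⟩ := hf
  obtain ⟨H⟩ := hy.symm
  obtain ⟨e, rfl⟩ := hsurj y
  have hH₀ : ∀ x, H.toContinuousMap (0, x) = p (ContinuousMap.const X e x) := fun x ↦
    H.apply_zero x
  refine ⟨(hp.liftHomotopy H.toContinuousMap (.const X e) hH₀).comp
    ((ContinuousMap.const X 1).prodMk (.id X)), fun x ↦ ?_⟩
  exact (congrFun (hp.liftHomotopy_lifts H.toContinuousMap _ hH₀) (1, x)).trans (H.apply_one x)

theorem sub_eq_sub_of_eqOn_exp {X : Type*} [TopologicalSpace X] {S : Set X}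
    (hS : IsPreconnected S) {φ θ : X → ℝ} (hφ : ContinuousOn φ S) (hθ : ContinuousOn θ S)
    (hexp : EqOn (fun z ↦ Circle.exp (φ z)) (fun z ↦ Circle.exp (θ z)) S) {x y : X} (hx : x ∈ S)
    (hy : y ∈ S) : φ x - φ y = θ x - θ y := by
  obtain ⟨m, hm⟩ := Circle.exp_eq_exp.1 (hexp hx)
  have hy' : φ y = θ y + m * (2 * Real.pi) :=
    Circle.isCoveringMap_exp.eqOn_of_comp_eqOn hS hφ (hθ.add continuousOn_const)
      (fun z hz ↦ (hexp hz).trans (Circle.exp_eq_exp.2 ⟨-m, by simp⟩)) hx hm hy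
  linarith

/-! ### Janiszewski's principle -/

section Janiszewski

variable {X : Type*} [TopologicalSpace X] (hcirc : ∀ f : C(X, Circle), f.Nullhomotopic)

include hcirc

theorem sub_eq_sub_of_exp_eq_of_union_eq_univ {O₁ O₂ : Set X} (hO₁ : IsOpen O₁) (hO₂ : IsOpen O₂)
    (hO : O₁ ∪ O₂ = univ) {θ₁ θ₂ : X → ℝ} (hθ₁ : ContinuousOn θ₁ O₁) (hθ₂ : ContinuousOn θ₂ O₂)
    (hexp : ∀ z, Circle.exp (θ₁ z) = Circle.exp (θ₂ z)) {S₁ S₂ : Set X} (hS₁ : IsPreconnected S₁)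
    (hS₂ : IsPreconnected S₂) (hSO₁ : S₁ ⊆ O₁) (hSO₂ : S₂ ⊆ O₂) {x y : X} (hx₁ : x ∈ S₁)
    (hx₂ : x ∈ S₂) (hy₁ : y ∈ S₁) (hy₂ : y ∈ S₂) : θ₁ x - θ₁ y = θ₂ x - θ₂ y := by
  have hf : Continuous fun z ↦ Circle.exp (θ₁ z) := by
    refine continuous_iff_continuousAt.2 fun z ↦ ?_
    rcases hO.ge (mem_univ z) with hz | hz
    · exact Circle.exp.continuous.continuousAt.comp (hθ₁.continuousAt (hO₁.mem_nhds hz))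
    · simpa only [hexp, Function.comp_def] using
        Circle.exp.continuous.continuousAt.comp (hθ₂.continuousAt (hO₂.mem_nhds hz))
  obtain ⟨φ, hφ⟩ := exists_lift_of_nullhomotopic Circle.isCoveringMap_exp
    (fun y ↦ ⟨_, Circle.exp_arg y⟩) (hcirc ⟨_, hf⟩)
  calc
    θ₁ x - θ₁ y = φ x - φ y := (sub_eq_sub_of_eqOn_exp hS₁ φ.continuous.continuousOn
      (hθ₁.mono hSO₁) (fun z _ ↦ hφ z) hx₁ hy₁).symm
    _ = θ₂ x - θ₂ y := sub_eq_sub_of_eqOn_exp hS₂ φ.continuous.continuousOn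
      (hθ₂.mono hSO₂) (fun z _ ↦ (hφ z).trans (hexp z)) hx₂ hy₂

/-- Janiszewski's principle. The map to the circle that goes once around while moving from `F₁` to
`F₂` inside `W`, and is constant outside `W`, has the two partial lifts `θ 0` and `θ 1`. -/
theorem mem_of_frontier_subset_union [NormalSpace X] {F₁ F₂ : Set X} (hF₁ : IsClosed F₁)
    (hF₂ : IsClosed F₂) (hF : Disjoint F₁ F₂) {S₁ S₂ : Set X} (hS₁ : IsPreconnected S₁)
    (hS₂ : IsPreconnected S₂) (hSF₁ : Disjoint S₁ F₁) (hSF₂ : Disjoint S₂ F₂) {W : Set X}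
    (hW : frontier W ⊆ F₁ ∪ F₂) {x y : X} (hx₁ : x ∈ S₁) (hx₂ : x ∈ S₂) (hy₁ : y ∈ S₁)
    (hy₂ : y ∈ S₂) (hxW : x ∈ W) : y ∈ W := by
  classical
  by_contra hyW
  obtain ⟨g, hg₁, hg₂, -⟩ := exists_continuous_zero_one_of_isClosed hF₁ hF₂ hF
  let θ (t : ℝ) (z : X) : ℝ := 2 * Real.pi * W.piecewise g (fun _ ↦ t) z
  have hθ : ∀ {t : ℝ} {O : Set X}, (∀ z ∈ O ∩ frontier W, g z = t) → ContinuousOn (θ t) O :=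
    fun h ↦ continuousOn_const.mul
      (ContinuousOn.piecewise h g.continuous.continuousOn continuousOn_const)
  have hθ₁ : ContinuousOn (θ 1) F₁ᶜ := hθ fun z hz ↦ hg₂ ((hW hz.2).resolve_left hz.1)
  have hθ₀ : ContinuousOn (θ 0) F₂ᶜ := hθ fun z hz ↦ hg₁ ((hW hz.2).resolve_right hz.1)
  have hexp : ∀ z, Circle.exp (θ 1 z) = Circle.exp (θ 0 z) := fun z ↦ by
    by_cases hz : z ∈ W <;> simp [θ, hz]
  have hsub := sub_eq_sub_of_exp_eq_of_union_eq_univ hcirc hF₁.isOpen_compl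
    hF₂.isOpen_compl (by rw [← compl_inter, hF.inter_eq, compl_empty]) hθ₁ hθ₀ hexp hS₁ hS₂
    hSF₁.subset_compl_right hSF₂.subset_compl_right hx₁ hx₂ hy₁ hy₂
  simp only [θ, piecewise_eq_of_mem _ _ _ hxW, piecewise_eq_of_notMem _ _ _ hyW] at hsub
  linarith [Real.pi_pos]

theorem isPreconnected_inter_of_union_eq_univ [NormalSpace X] {U V : Set X} (hU : IsOpen U)
    (hV : IsOpen V) (hUc : IsPreconnected U) (hVc : IsPreconnected V) (hUV : U ∪ V = univ) :
    IsPreconnected (U ∩ V) := by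
  rintro O O' hO hO' hcover ⟨x, hx, hxO⟩ ⟨y, hy, hyO'⟩
  by_contra hne
  have hfr : frontier (U ∩ V ∩ O) ⊆ Uᶜ ∪ Vᶜ := by
    intro z hz
    rw [← compl_inter]
    intro hzUV
    rw [((hU.inter hV).inter hO).frontier_eq] at hz
    have hzO' : z ∈ O' := (hcover hzUV).resolve_left fun hzO ↦ hz.2 ⟨hzUV, hzO⟩
    obtain ⟨w, ⟨hwUV, hwO'⟩, -, hwO⟩ :=
      mem_closure_iff.1 hz.1 _ ((hU.inter hV).inter hO') ⟨hzUV, hzO'⟩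
    exact hne ⟨w, hwUV, hwO, hwO'⟩
  have hdisj : Disjoint Uᶜ Vᶜ := by
    rw [disjoint_iff_inter_eq_empty, ← compl_union, hUV, compl_univ]
  have hyO : y ∈ U ∩ V ∩ O := mem_of_frontier_subset_union hcirc hU.isClosed_compl
    hV.isClosed_compl hdisj hUc hVc disjoint_compl_right disjoint_compl_right
    hfr hx.1 hx.2 hy.1 hy.2 ⟨hx, hxO⟩
  exact hne ⟨y, hy, hyO.2, hyO'⟩

theorem exists_reflTransGen_of_frontier_subset [NormalSpace X] {ι : Type*} [Finite ι]
    {E : ι → Set X} (hE : ∀ i, IsClosed (E i)) {W : Set X} (hW : frontier W ⊆ ⋃ i, E i)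
    {S T : Set X} (hS : IsPreconnected S) (hT : IsPreconnected T) {x y : X} (hxS : x ∈ S)
    (hxT : x ∈ T) (hyS : y ∈ S) (hyT : y ∈ T) (hxW : x ∈ W) (hyW : y ∉ W) :
    ∃ i j, (S ∩ E i).Nonempty ∧
      Relation.ReflTransGen (fun k l ↦ (E k ∩ E l).Nonempty) i j ∧ (E j ∩ T).Nonempty := by
  by_contra! hno
  let R : Set ι := {j | ∃ i, (S ∩ E i).Nonempty ∧
    Relation.ReflTransGen (fun k l ↦ (E k ∩ E l).Nonempty) i j}
  have hclosed : ∀ I : Set ι, IsClosed (⋃ i ∈ I, E i) := fun I ↦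
    I.toFinite.isClosed_biUnion fun i _ ↦ hE i
  have hdisj : Disjoint (⋃ i ∈ R, E i) (⋃ i ∈ Rᶜ, E i) := by
    simp only [disjoint_iUnion_left, disjoint_iUnion_right]
    rintro j hj i ⟨k, hSk, hki⟩
    exact not_not.1 fun h ↦ hj ⟨k, hSk, hki.tail (not_disjoint_iff_nonempty_inter.1 h)⟩
  have hSR : Disjoint S (⋃ i ∈ Rᶜ, E i) := by
    simp only [disjoint_iUnion_right]
    exact fun i hi ↦ not_not.1 fun h ↦ hi ⟨i, not_disjoint_iff_nonempty_inter.1 h, .refl⟩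
  have hTR : Disjoint T (⋃ i ∈ R, E i) := by
    simp only [disjoint_iUnion_right]
    rintro j ⟨i, hSi, hij⟩
    exact (disjoint_iff_inter_eq_empty.2 (hno i j hSi hij)).symm
  have hcover : frontier W ⊆ (⋃ i ∈ R, E i) ∪ ⋃ i ∈ Rᶜ, E i := by
    rwa [← biUnion_union, union_compl_self, biUnion_univ]
  exact hyW (mem_of_frontier_subset_union hcirc (hclosed R) (hclosed Rᶜ) hdisj hT hS hTR hSR
    hcover hxT hxS hyT hyS hxW)

end Janiszewski

/-! ### Locally connected spaces -/

theorem frontier_connectedComponentIn_subset_compl {X : Type*} [TopologicalSpace X]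
    [LocallyConnectedSpace X] {O : Set X} (hO : IsOpen O) (x : X) :
    frontier (connectedComponentIn O x) ⊆ Oᶜ := by
  intro z hz hzO
  rw [hO.connectedComponentIn.frontier_eq] at hz
  obtain ⟨w, hwz, hwx⟩ :=
    mem_closure_iff.1 hz.1 _ hO.connectedComponentIn (mem_connectedComponentIn hzO)
  apply hz.2
  rw [connectedComponentIn_eq hwx, ← connectedComponentIn_eq hwz]
  exact mem_connectedComponentIn hzO

theorem exists_isClosed_isPreconnected_subset {X : Type*} [TopologicalSpace X] [RegularSpace X]
    [LocallyConnectedSpace X] {O : Set X} (hO : IsOpen O) (hOc : IsPreconnected O) {x y : X}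
    (hx : x ∈ O) (hy : y ∈ O) : ∃ P ⊆ O, IsClosed P ∧ IsPreconnected P ∧ x ∈ P ∧ y ∈ P := by
  refine hOc.induction₂
    (fun x y ↦ ∃ P ⊆ O, IsClosed P ∧ IsPreconnected P ∧ x ∈ P ∧ y ∈ P) ?_ ?_ ?_ hx hy
  · intro z hz
    obtain ⟨K, ⟨hKz, hK⟩, hKO⟩ := (closed_nhds_basis z).mem_iff.1 (hO.mem_nhds hz)
    filter_upwards [mem_nhdsWithin_of_mem_nhds (connectedComponentIn_mem_nhds hKz)] with w hw
    exact ⟨closure (connectedComponentIn K z),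
      (closure_minimal (connectedComponentIn_subset K z) hK).trans hKO, isClosed_closure,
      isPreconnected_connectedComponentIn.closure,
      subset_closure (mem_connectedComponentIn (mem_of_mem_nhds hKz)), subset_closure hw⟩
  · rintro u v w - - - ⟨P, hPO, hP, hPc, hu, hv⟩ ⟨Q, hQO, hQ, hQc, hv', hw⟩
    exact ⟨P ∪ Q, union_subset hPO hQO, hP.union hQ, hPc.union v hv hv' hQc, .inl hu, .inr hw⟩
  · rintro u v - - ⟨P, hPO, hP, hPc, hu, hv⟩
    exact ⟨P, hPO, hP, hPc, hv, hu⟩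

theorem exists_isClosed_isPreconnected_joining {X : Type*} [TopologicalSpace X] [T4Space X]
    [LocallyConnectedSpace X] (hcirc : ∀ f : C(X, Circle), f.Nullhomotopic) {A B N : Set X} {c : X}
    (hcut : IsPreconnected ({c}ᶜ : Set X)) (hA : IsPreconnected A) (hA' : A.Nontrivial)
    (hB : IsPreconnected B) (hB' : B.Nontrivial) (hcA : c ∈ A) (hcB : c ∈ B) (hN : IsOpen N)
    (hNc : IsPreconnected N) (hcN : c ∈ N) :
    ∃ P ⊆ N \ {c}, IsClosed P ∧ IsPreconnected P ∧ (A ∩ P).Nonempty ∧ (B ∩ P).Nonempty := by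
  have hN_nhds := hN.mem_nhds hcN
  obtain ⟨a, ⟨haN, haA⟩, hac⟩ :=
    preperfect_iff_nhds.1 (hA.preperfect_of_nontrivial hA') c hcA N hN_nhds
  obtain ⟨d, ⟨hdN, hdB⟩, hdc⟩ :=
    preperfect_iff_nhds.1 (hB.preperfect_of_nontrivial hB') c hcB N hN_nhds
  have hunion : N ∪ {c}ᶜ = univ :=
    eq_univ_of_forall fun z ↦ or_iff_not_imp_right.2 fun hz ↦ not_not.1 hz ▸ hcN
  obtain ⟨P, hPN, hP, hPc, haP, hdP⟩ := exists_isClosed_isPreconnected_subset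
    (hN.inter isOpen_compl_singleton)
    (isPreconnected_inter_of_union_eq_univ hcirc hN isOpen_compl_singleton hNc hcut hunion)
    ⟨haN, hac⟩ ⟨hdN, hdc⟩
  exact ⟨P, hPN, hP, hPc, ⟨a, haA, haP⟩, ⟨d, hdB, hdP⟩⟩

/-! ### Fine and null collections -/

theorem FineFam.exists_mem_nhds_frontier_subset {X : Type*} [PseudoMetricSpace X]
    [LocallyConnectedSpace X] {𝓐 : Set (Set X)} (hfine : FineFam 𝓐)
    (hclosed : ∀ A ∈ 𝓐, IsClosed A) {Z : Set X} (hZ : IsCompact Z) {c : X} (hc : c ∉ Z) :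
    ∃ U ∈ 𝓝 c, Disjoint (closure U) Z ∧
      ∃ 𝓔 ⊆ 𝓐, 𝓔.Finite ∧ c ∉ ⋃₀ 𝓔 ∧ frontier U ⊆ ⋃₀ 𝓔 := by
  refine hZ.induction_on (p := fun Z ↦ ∃ U ∈ 𝓝 c, Disjoint (closure U) Z ∧
    ∃ 𝓔 ⊆ 𝓐, 𝓔.Finite ∧ c ∉ ⋃₀ 𝓔 ∧ frontier U ⊆ ⋃₀ 𝓔) ?_ ?_ ?_ ?_
  · exact ⟨univ, univ_mem, disjoint_empty _, ∅, empty_subset _, finite_empty, by simp, by simp⟩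
  · rintro Y Z hYZ ⟨U, hU, hUZ, h⟩
    exact ⟨U, hU, hUZ.mono_right hYZ, h⟩
  · rintro Y Z ⟨U, hU, hUY, 𝓔, h𝓔, hfin, hc𝓔, hfr⟩ ⟨V, hV, hVZ, 𝓓, h𝓓, hfin', hc𝓓, hfr'⟩
    refine ⟨U ∩ V, inter_mem hU hV, ?_, 𝓔 ∪ 𝓓, union_subset h𝓔 h𝓓, hfin.union hfin', ?_, ?_⟩
    · exact disjoint_union_right.2 ⟨hUY.mono_left (closure_mono inter_subset_left),
        hVZ.mono_left (closure_mono inter_subset_right)⟩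
    · rw [sUnion_union]
      exact not_or_intro hc𝓔 hc𝓓
    · rw [sUnion_union]
      exact (frontier_inter_subset U V).trans
        (union_subset_union (inter_subset_left.trans hfr) (inter_subset_right.trans hfr'))
  · intro z hz
    obtain ⟨𝓔, h𝓔, hfin, hc𝓔, hz𝓔, hsep⟩ := hfine c z (ne_of_mem_of_not_mem hz hc).symm
    have hO : IsOpen (⋃₀ 𝓔)ᶜ := by
      rw [sUnion_eq_biUnion]
      exact (hfin.isClosed_biUnion fun F hF ↦ hclosed F (h𝓔 hF)).isOpen_compl
    have hdisj : Disjoint (connectedComponentIn (⋃₀ 𝓔)ᶜ c) (connectedComponentIn (⋃₀ 𝓔)ᶜ z) :=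
      Set.disjoint_left.2 fun w hwc hwz ↦
        hsep ((connectedComponentIn_eq hwc).trans (connectedComponentIn_eq hwz).symm)
    exact ⟨_, mem_nhdsWithin_of_mem_nhds (connectedComponentIn_mem_nhds (hO.mem_nhds hz𝓔)), _,
      connectedComponentIn_mem_nhds (hO.mem_nhds hc𝓔),
      hdisj.closure_left hO.connectedComponentIn, 𝓔, h𝓔, hfin, hc𝓔,
      (frontier_connectedComponentIn_subset_compl hO c).trans_eq (compl_compl _)⟩

theorem NullFam.eventually_mem {X : Type*} [PseudoMetricSpace X] [BoundedSpace X]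
    {𝓐 : Set (Set X)} (hnull : NullFam 𝓐) (hclosed : ∀ A ∈ 𝓐, IsClosed A) {D : Set X}
    (hD : IsClosed D) {c : X} (hc : c ∉ D) :
    ∀ᶠ x in 𝓝 c, ∀ F ∈ 𝓐, x ∈ F → (F ∩ D).Nonempty → c ∈ F := by
  obtain ⟨ε, hε, hball⟩ := Metric.isOpen_iff.1 hD.isOpen_compl c hc
  have hlarge : ∀ᶠ x in 𝓝 c, ∀ F ∈ {F ∈ 𝓐 | ε / 2 < Metric.diam F}, x ∈ F → c ∈ F := by
    refine (eventually_all_finite (hnull _ (half_pos hε))).2 fun F hF ↦ ?_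
    by_cases hcF : c ∈ F
    · exact .of_forall fun _ _ ↦ hcF
    · filter_upwards [(hclosed F hF.1).isOpen_compl.mem_nhds hcF] with x hx hxF
      exact absurd hxF hx
  filter_upwards [hlarge, Metric.ball_mem_nhds c (half_pos hε)] with x hx hxc F hF hxF ⟨z, hzF, hzD⟩
  refine hx F ⟨hF, ?_⟩ hxF
  have hzc : ε ≤ dist z c := not_lt.1 fun h ↦ hball h hzD
  have hzx : dist z x ≤ Metric.diam F :=
    Metric.dist_le_diam_of_mem (Bornology.IsBounded.all F) hzF hxF
  linarith [dist_triangle z x c, Metric.mem_ball.1 hxc]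

/-! ### Crossing sequences -/

section CrossSeqAvoiding

variable {X : Type*} [TopologicalSpace X] {𝓐 : Set (Set X)} {A B D F : Set X}

theorem CrossSeqAvoiding.of_crosses (hA : A ∈ 𝓐) (hF : F ∈ 𝓐) (hB : B ∈ 𝓐) (hFD : F ∩ D = ∅)
    (hAF : Crosses A F) (hFB : Crosses F B) : CrossSeqAvoiding 𝓐 A B D := by
  refine ⟨1, le_rfl, fun | 0 => A | 1 => F | _ => B, rfl, rfl, ?_, ?_, ?_⟩
  · rintro (_ | _ | i) -
    exacts [hA, hF, hB]
  · rintro (_ | _ | i) hi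
    exacts [hAF, hFB, by omega]
  · intro i h₁ h₂
    obtain rfl : i = 1 := by omega
    exact hFD

theorem CrossSeqAvoiding.cons (h : CrossSeqAvoiding 𝓐 F B D) (hA : A ∈ 𝓐) (hAF : Crosses A F)
    (hFD : F ∩ D = ∅) : CrossSeqAvoiding 𝓐 A B D := by
  obtain ⟨n, -, s, rfl, hsB, hmem, hcross, hav⟩ := h
  refine ⟨n + 1, by omega, fun | 0 => A | i + 1 => s i, rfl, hsB, ?_, ?_, ?_⟩
  · rintro (_ | i) hi
    exacts [hA, hmem i (by omega)]
  · rintro (_ | i) hi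
    exacts [hAF, hcross i (by omega)]
  · rintro (_ | _ | i) h₁ h₂
    exacts [by omega, hFD, hav (i + 1) (by omega) (by omega)]

theorem CrossSeqAvoiding.of_reflTransGen {ι : Type*} {r : ι → ι → Prop} {E : ι → Set X}
    (hr : ∀ i j, r i j → Crosses (E i) (E j)) (hE : ∀ i, E i ∈ 𝓐) (hED : ∀ i, E i ∩ D = ∅)
    (hA : A ∈ 𝓐) (hB : B ∈ 𝓐) {i j : ι} (hij : Relation.ReflTransGen r i j)
    (hAi : Crosses A (E i)) (hjB : Crosses (E j) B) : CrossSeqAvoiding 𝓐 A B D := by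
  induction hij using Relation.ReflTransGen.head_induction_on generalizing A with
  | refl => exact .of_crosses hA (hE j) hB (hED j) hAi hjB
  | head hik _ ih => exact (ih (hE _) (hr _ _ hik)).cons hA hAi (hED _)

end CrossSeqAvoiding

theorem crossing_avoiding_pair_general {X : Type*} [MetricSpace X] [CompactSpace X]
    [LocallyConnectedSpace X] (hcirc : ∀ f : C(X, Circle), f.Nullhomotopic) {𝓐 : Set (Set X)}
    (hclosed : ∀ A ∈ 𝓐, IsClosed A) (hnull : NullFam 𝓐) (hfine : FineFam 𝓐) {A B : Set X}
    (hA : A ∈ 𝓐) (hB : B ∈ 𝓐) (hAc : IsPreconnected A) (hA' : A.Nontrivial)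
    (hBc : IsPreconnected B) (hB' : B.Nontrivial) {c : X} (hcut : IsPreconnected ({c}ᶜ : Set X))
    (hcA : c ∈ A) (hcB : c ∈ B) {D : Set X} (hD : IsClosed D) (hcD : c ∉ D) :
    CrossSeqAvoiding 𝓐 A B (insert c D) := by
  obtain ⟨N, ⟨hN, hcN, hNc⟩, hND⟩ := (LocallyConnectedSpace.open_connected_basis c).mem_iff.1
    (hnull.eventually_mem hclosed hD hcD)
  obtain ⟨P, hPN, hP, hPc, ⟨a, haA, haP⟩, ⟨d, hdB, hdP⟩⟩ :=
    exists_isClosed_isPreconnected_joining hcirc hcut hAc hA' hBc hB' hcA hcB hN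
      hNc.isPreconnected hcN
  obtain ⟨U, hU, hUdisj, 𝓔, h𝓔, hfin, hc𝓔, hfr⟩ := hfine.exists_mem_nhds_frontier_subset
    hclosed (hP.union hN.isClosed_compl).isCompact
    (not_or_intro (fun h ↦ (hPN h).2 rfl) (not_not.2 hcN))
  obtain ⟨hUP, hUN⟩ := disjoint_union_right.1 hUdisj
  let 𝓕 : Set (Set X) := {F ∈ 𝓔 | (F ∩ frontier U).Nonempty}
  have : Finite 𝓕 := hfin.subset (sep_subset _ _)
  have h𝓕D : ∀ F : 𝓕, (F : Set X) ∩ insert c D = ∅ := by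
    rintro ⟨F, hF, x, hxF, hxU⟩
    have hcF : c ∉ F := fun h ↦ hc𝓔 ⟨F, hF, h⟩
    have hxN : x ∈ N := disjoint_compl_right_iff_subset.1 hUN (frontier_subset_closure hxU)
    rw [inter_insert_of_notMem hcF, ← not_nonempty_iff_eq_empty]
    exact fun h ↦ hcF (hND hxN F (h𝓔 hF) hxF h)
  have hcover : frontier U ⊆ ⋃ F : 𝓕, (F : Set X) ∩ frontier U := fun z hz ↦ by
    obtain ⟨F, hF, hzF⟩ := hfr hz
    exact mem_iUnion.2 ⟨⟨F, hF, z, hzF, hz⟩, hzF, hz⟩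
  obtain ⟨F, G, ⟨x, hxA, hxF, -⟩, hFG, ⟨y, ⟨hyG, hyU⟩, hyBP⟩⟩ :=
    exists_reflTransGen_of_frontier_subset hcirc
      (fun F : 𝓕 ↦ (hclosed F (h𝓔 F.2.1)).inter isClosed_frontier) hcover hAc
      (hBc.union d hdB hdP hPc) hcA (.inl hcB) haA (.inr haP) (mem_of_mem_nhds hU)
      fun haU ↦ hUP.notMem_of_mem_left (subset_closure haU) haP
  have hyB : y ∈ B := hyBP.resolve_right (hUP.notMem_of_mem_left (frontier_subset_closure hyU))
  exact .of_reflTransGen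
    (fun _ _ h ↦ .inl (h.mono (inter_subset_inter inter_subset_left inter_subset_left)))
    (fun F ↦ h𝓔 F.2.1) h𝓕D hA hB hFG (.inl ⟨x, hxA, hxF⟩) (.inl ⟨y, hyG, hyB⟩)

/-- Case II of the Main Theorem: if `A ∩ B = {c}` and `b ∈ B \ {c}`, then there is a
crossing sequence in `𝓐` from `A` to `B` whose intermediate terms avoid `{b, c}`. -/
theorem crossing_avoiding_pair {X : Type*} [MetricSpace X] [CompactSpace X]
    [ConnectedSpace X] [LocallyConnectedSpace X]
    (hcut : ∀ x : X, IsPreconnected ({x}ᶜ : Set X))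
    (hcirc : ∀ f : C(X, Circle), f.Nullhomotopic)
    (𝓐 : Set (Set X))
    (hclosed : ∀ A ∈ 𝓐, IsClosed A) (hconn : ∀ A ∈ 𝓐, IsConnected A)
    (hbig : ∀ A ∈ 𝓐, A.Nontrivial)
    (hnull : NullFam 𝓐) (hfine : FineFam 𝓐)
    (A B : Set X) (hA : A ∈ 𝓐) (hB : B ∈ 𝓐)
    (c : X) (hAB : A ∩ B = {c}) (b : X) (hb : b ∈ B) (hbc : b ≠ c) :
    CrossSeqAvoiding 𝓐 A B {b, c} := by
  have hc : c ∈ A ∩ B := hAB ▸ mem_singleton c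
  rw [pair_comm]
  exact crossing_avoiding_pair_general hcirc hclosed hnull hfine hA hB (hconn A hA).isPreconnected
    (hbig A hA) (hconn B hB).isPreconnected (hbig B hB) (hcut c) hc.1 hc.2 isClosed_singleton
    (notMem_singleton_iff.2 hbc.symm)
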